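/- Let β⁰ ∈ ℂ^p be s₀-sparse with support S₀, let y = Xβ⁰ + ε for some X ∈ ℂ^{n×p} and ε ∈ ℂ^n, and let δ ∈ (0,1). Suppose X/√n satisfies the restricted isometry property of order t := (36·(1+δ)/(1−δ) + 1)·s₀ with constant δ_t < δ, and suppose max_{1≤j≤p} (2/n)|⟨ε, X_j⟩| ≤ λ₀ for some λ₀ > 0. Let β̂ be the complex LASSO estimator with regularization parameter λ ≥ 2λ₀. Then (1/n)‖X(β̂ − β⁰)‖₂² + λ‖β̂ − β⁰‖₁ ≤ 4λ²s₀/(1 − δ_t); in particular, ‖β̂ − β⁰‖₁ ≤ 4λs₀/(1 − δ_t). -/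

import Mathlib

open Matrix Finset

/-- The number of nonzero entries of a vector. -/
noncomputable def sparseCount {p : ℕ} (v : Fin p → ℂ) : ℕ :=
  (Finset.univ.filter fun i => v i ≠ 0).card

/-- Squared `ℓ₂` norm of a complex vector. -/
noncomputable def l2sq {m : ℕ} (v : Fin m → ℂ) : ℝ := ∑ i, ‖v i‖ ^ 2

/-- `ℓ₁` norm of a complex vector. -/
noncomputable def l1 {m : ℕ} (v : Fin m → ℂ) : ℝ := ∑ i, ‖v i‖

/-- `A` satisfies the restricted isometry property of (real) order `s` with constant `d`:
`(1-d)‖β‖₂² ≤ ‖Aβ‖₂² ≤ (1+d)‖β‖₂²` for all vectors `β` with at most `s` nonzero entries. -/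
def RIP {n p : ℕ} (A : Matrix (Fin n) (Fin p) ℂ) (s : ℝ) (d : ℝ) : Prop :=
  ∀ β : Fin p → ℂ, (sparseCount β : ℝ) ≤ s →
    (1 - d) * l2sq β ≤ l2sq (A.mulVec β) ∧ l2sq (A.mulVec β) ≤ (1 + d) * l2sq β

/-- `b` is a complex LASSO estimator for data `y`, design `X` and parameter `lam`, i.e. a
minimizer of `β ↦ 1/(2n)‖Xβ - y‖₂² + lam ‖β‖₁`. -/
def IsLasso {n p : ℕ} (X : Matrix (Fin n) (Fin p) ℂ) (y : Fin n → ℂ) (lam : ℝ)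
    (b : Fin p → ℂ) : Prop :=
  ∀ z : Fin p → ℂ,
    1 / (2 * n) * l2sq (X.mulVec b - y) + lam * l1 b ≤
      1 / (2 * n) * l2sq (X.mulVec z - y) + lam * l1 z


lemma exists_top {ι : Type*} [DecidableEq ι] (f : ι → ℝ) (T : Finset ι) (M : ℕ) (h : M ≤ T.card) :
    ∃ B ⊆ T, B.card = M ∧ ∀ b ∈ B, ∀ a ∈ T \ B, f a ≤ f b := by
  induction M with
  | zero => exact ⟨∅, by simp, by simp, by simp⟩
  | succ M ih =>
    obtain ⟨B, hB, hc, hm⟩ := ih (by omega)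
    have hne : (T \ B).Nonempty := by
      rw [← Finset.card_pos, Finset.card_sdiff_of_subset hB]; omega
    obtain ⟨x, hx, hxm⟩ := Finset.exists_max_image (T \ B) f hne
    have hx' := Finset.mem_sdiff.1 hx
    refine ⟨insert x B, ?_, ?_, ?_⟩
    · intro z hz
      rcases Finset.mem_insert.1 hz with rfl | hz
      · exact hx'.1
      · exact hB hz
    · rw [Finset.card_insert_of_notMem hx'.2, hc]
    · intro b hb a ha
      have ha' : a ∈ T \ B := by
        simp only [Finset.mem_sdiff, Finset.mem_insert, not_or] at ha ⊢
        exact ⟨ha.1, ha.2.2⟩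
      rcases Finset.mem_insert.1 hb with rfl | hb
      · exact hxm a ha'
      · exact hm b hb a ha'

lemma exists_block {ι : Type*} [DecidableEq ι] (f : ι → ℝ) (T : Finset ι) (M : ℕ) :
    ∃ B ⊆ T, B.card ≤ M ∧ (B = T ∨ B.card = M) ∧
      ∀ a ∈ T \ B, (M : ℝ) * f a ≤ ∑ b ∈ B, f b := by
  by_cases h : M ≤ T.card
  · obtain ⟨B, hB, hc, hm⟩ := exists_top f T M h
    refine ⟨B, hB, hc.le, Or.inr hc, fun a ha => ?_⟩
    have := Finset.card_nsmul_le_sum B f (f a) (fun b hb => hm b hb a ha)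
    rwa [hc, nsmul_eq_mul] at this
  · exact ⟨T, subset_rfl, by omega, Or.inl rfl, by simp⟩

/-- Restriction of a vector to a set of coordinates. -/
noncomputable def restr {p : ℕ} (T : Finset (Fin p)) (v : Fin p → ℂ) : Fin p → ℂ :=
  fun i => if i ∈ T then v i else 0

lemma restr_split {p : ℕ} (T B : Finset (Fin p)) (hB : B ⊆ T) (v : Fin p → ℂ) :
    restr T v = restr B v + restr (T \ B) v := by
  funext i
  simp only [restr, Pi.add_apply, Finset.mem_sdiff]
  by_cases h : i ∈ B
  · simp [h, hB h]
  · simp [h]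

lemma l2sq_restr {p : ℕ} (T : Finset (Fin p)) (v : Fin p → ℂ) :
    l2sq (restr T v) = ∑ i ∈ T, ‖v i‖ ^ 2 := by
  unfold l2sq restr
  rw [← Finset.sum_filter_add_sum_filter_not univ (· ∈ T)]
  rw [Finset.sum_congr (g := fun i => ‖v i‖ ^ 2) rfl, Finset.sum_eq_zero (s := univ.filter (· ∉ T))]
  · simp
  · intro i hi; simp at hi; simp [hi]
  · intro i hi; simp at hi; simp [hi]

lemma sparse_restr {p : ℕ} (T : Finset (Fin p)) (v : Fin p → ℂ) :
    sparseCount (restr T v) ≤ T.card := by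
  unfold sparseCount restr
  apply Finset.card_le_card
  intro i hi
  by_contra h
  simp [h] at hi

/-- The Euclidean norm of a vector. -/
noncomputable def nrm {m : ℕ} (v : Fin m → ℂ) : ℝ := Real.sqrt (l2sq v)

lemma l2sq_nonneg {m : ℕ} (v : Fin m → ℂ) : 0 ≤ l2sq v :=
  Finset.sum_nonneg fun _ _ => by positivity

lemma nrm_eq {m : ℕ} (v : Fin m → ℂ) : nrm v = ‖(WithLp.toLp 2 v : EuclideanSpace ℂ (Fin m))‖ := by
  rw [EuclideanSpace.norm_eq]; rfl

lemma nrm_add {m : ℕ} (v w : Fin m → ℂ) : nrm (v + w) ≤ nrm v + nrm w := by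
  simp only [nrm_eq, WithLp.toLp_add]; exact norm_add_le _ _

lemma nrm_sub {m : ℕ} (v w : Fin m → ℂ) : nrm v ≤ nrm (v + w) + nrm w := by
  simp only [nrm_eq, WithLp.toLp_add]
  have := norm_sub_le (WithLp.toLp 2 v + WithLp.toLp 2 w : EuclideanSpace ℂ (Fin m)) (WithLp.toLp 2 w)
  simpa using this

lemma nrm_sq {m : ℕ} (v : Fin m → ℂ) : nrm v ^ 2 = l2sq v := Real.sq_sqrt (l2sq_nonneg v)

lemma nrm_nonneg {m : ℕ} (v : Fin m → ℂ) : 0 ≤ nrm v := Real.sqrt_nonneg _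

/-- tail bound by greedy blocks -/
lemma tail_bound {n p : ℕ} (A : Matrix (Fin n) (Fin p) ℂ) (M : ℕ) (hM : 0 < M) (D : ℝ)
    (hD : 0 ≤ D)
    (hA : ∀ β : Fin p → ℂ, sparseCount β ≤ M → l2sq (A.mulVec β) ≤ D * l2sq β)
    (v : Fin p → ℂ) : ∀ (k : ℕ) (T : Finset (Fin p)), T.card ≤ k → ∀ m : ℝ, 0 ≤ m →
      (∀ i ∈ T, ‖v i‖ ≤ m) →
      nrm (A.mulVec (restr T v)) ≤ √D / √M * (M * m + ∑ i ∈ T, ‖v i‖) := by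
  have hM' : (0 : ℝ) < M := by exact_mod_cast hM
  intro k
  induction k with
  | zero =>
    intro T hT m hm _
    have : T = ∅ := by simpa using hT
    subst this
    have : restr ∅ v = 0 := by funext i; simp [restr]
    rw [this]
    simp only [Matrix.mulVec_zero, sum_empty, add_zero]
    have : nrm (0 : Fin n → ℂ) = 0 := by simp [nrm, l2sq]
    rw [this]; positivity
  | succ k ih =>
    intro T hT m hm hvm
    obtain ⟨B, hBT, hBM, hBe, hBs⟩ := exists_block (fun i => ‖v i‖) T M
    have hb1 : nrm (A.mulVec (restr B v)) ≤ √D / √M * (M * m) := by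
      have h1 : √D / √M * (M * m) = √(D * (M * m ^ 2)) := by
        rw [Real.sqrt_mul hD, Real.sqrt_mul hM'.le, Real.sqrt_sq hm]
        have : (M : ℝ) = √M * √M := (Real.mul_self_sqrt hM'.le).symm
        have h0 : √(M : ℝ) ≠ 0 := (Real.sqrt_pos.2 hM').ne'
        field_simp
        rw [Real.sq_sqrt hM'.le]
      rw [h1]
      apply Real.sqrt_le_sqrt
      refine (hA _ ((sparse_restr B v).trans hBM)).trans ?_
      apply mul_le_mul_of_nonneg_left _ hD
      rw [l2sq_restr]
      calc ∑ i ∈ B, ‖v i‖ ^ 2 ≤ ∑ i ∈ B, m ^ 2 := by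
            apply Finset.sum_le_sum; intro i hi
            have := hvm i (hBT hi)
            gcongr
        _ = B.card * m ^ 2 := by simp
        _ ≤ M * m ^ 2 := by gcongr
    have hcard : (T \ B).card ≤ k := by
      rw [Finset.card_sdiff_of_subset hBT]
      rcases hBe with h | h
      · rw [h]; omega
      · omega
    have hb2 := ih (T \ B) hcard ((∑ b ∈ B, ‖v b‖) / M) (by positivity) (by
      intro i hi
      rw [le_div_iff₀ hM', mul_comm]
      exact hBs i hi)
    rw [restr_split T B hBT, Matrix.mulVec_add]
    refine (nrm_add _ _).trans ((add_le_add hb1 hb2).trans ?_)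
    rw [← Finset.sum_sdiff hBT, mul_div_cancel₀ _ hM'.ne', ← mul_add]
    apply le_of_eq; ring

lemma cone_bound {n p : ℕ} (A : Matrix (Fin n) (Fin p) ℂ) (M s : ℕ) (hM : 0 < M) (d : ℝ)
    (hd0 : 0 ≤ d) (hd1 : d < 1) (hMs : 25 * s * (1 + d) ≤ (1 - d) * M)
    (hA : RIP A ((M + s : ℕ) : ℝ) d) (v : Fin p → ℂ) (S : Finset (Fin p)) (hS : S.card ≤ s) :
    ∑ i ∈ S, ‖v i‖ ≤ √(s / (1 - d)) * nrm (A.mulVec v) + (∑ i ∈ Sᶜ, ‖v i‖) / 5 := by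
  have hM' : (0 : ℝ) < M := by exact_mod_cast hM
  have hd : 0 < 1 - d := by linarith
  obtain ⟨B, hBT, hBM, hBe, hBs⟩ := exists_block (fun i => ‖v i‖) Sᶜ M
  have ht := tail_bound A M hM (1 + d) (by linarith) (fun β hβ => (hA β (by
      exact_mod_cast (by omega))).2) v _ (Sᶜ \ B) le_rfl ((∑ b ∈ B, ‖v b‖) / M) (by positivity) (by
      intro i hi
      rw [le_div_iff₀ hM', mul_comm]
      exact hBs i hi)
  rw [mul_div_cancel₀ _ hM'.ne', add_comm (∑ b ∈ B, ‖v b‖), Finset.sum_sdiff hBT] at ht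
  set c := ∑ i ∈ Sᶜ, ‖v i‖ with hc
  have hc0 : 0 ≤ c := Finset.sum_nonneg fun _ _ => norm_nonneg _
  have hcompl : Sᶜ \ B = univ \ (S ∪ B) := by
    ext i; simp
  have hv : v = restr (S ∪ B) v + restr (Sᶜ \ B) v := by
    rw [hcompl, ← restr_split _ _ (Finset.subset_univ _)]
    funext i; simp [restr]
  have h1 : nrm (A.mulVec (restr (S ∪ B) v)) ≤ nrm (A.mulVec v) + √(1 + d) / √M * c := by
    have := nrm_sub (A.mulVec (restr (S ∪ B) v)) (A.mulVec (restr (Sᶜ \ B) v))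
    rw [← Matrix.mulVec_add, ← hv] at this
    linarith
  have h2 : (1 - d) * ∑ i ∈ S, ‖v i‖ ^ 2 ≤ nrm (A.mulVec (restr (S ∪ B) v)) ^ 2 := by
    rw [nrm_sq]
    refine le_trans ?_ (hA _ ?_).1
    · rw [l2sq_restr]
      apply mul_le_mul_of_nonneg_left _ hd.le
      exact Finset.sum_le_sum_of_subset_of_nonneg Finset.subset_union_left
        (fun _ _ _ => by positivity)
    · have := sparse_restr (S ∪ B) v
      have h' := Finset.card_union_le S B
      exact_mod_cast (by omega)
  have h3 : (∑ i ∈ S, ‖v i‖) ^ 2 ≤ s * ∑ i ∈ S, ‖v i‖ ^ 2 := by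
    refine sq_sum_le_card_mul_sum_sq.trans ?_
    gcongr
  have h4 : ∑ i ∈ S, ‖v i‖ ≤ √(s / (1 - d)) * nrm (A.mulVec (restr (S ∪ B) v)) := by
    apply le_of_sq_le_sq _ (mul_nonneg (Real.sqrt_nonneg _) (nrm_nonneg _))
    rw [mul_pow, Real.sq_sqrt (by positivity)]
    refine h3.trans ?_
    rw [div_mul_eq_mul_div, le_div_iff₀ hd]
    have hs : (0 : ℝ) ≤ s := by positivity
    nlinarith
  have h5 : √(s / (1 - d)) * (√(1 + d) / √M) ≤ 1 / 5 := by
    rw [← Real.sqrt_div (by linarith), ← Real.sqrt_mul (by positivity)]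
    rw [Real.sqrt_le_left (by norm_num), div_mul_div_comm, div_le_iff₀ (by positivity)]
    linarith
  calc _ ≤ _ := h4
    _ ≤ √(s / (1 - d)) * (nrm (A.mulVec v) + √(1 + d) / √M * c) := by gcongr
    _ = √(s / (1 - d)) * nrm (A.mulVec v) + √(s / (1 - d)) * (√(1 + d) / √M) * c := by ring
    _ ≤ √(s / (1 - d)) * nrm (A.mulVec v) + 1 / 5 * c := by gcongr
    _ = _ := by ring

/-- Real part of the inner product. -/
noncomputable def rip {m : ℕ} (e w : Fin m → ℂ) : ℝ := (∑ k, (starRingEnd ℂ) (e k) * w k).re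

lemma l2sq_expand {m : ℕ} (e w : Fin m → ℂ) (t : ℝ) :
    l2sq ((t : ℂ) • w - e) = t ^ 2 * l2sq w - 2 * t * rip e w + l2sq e := by
  unfold l2sq rip
  rw [Complex.re_sum, Finset.mul_sum, Finset.mul_sum, ← Finset.sum_sub_distrib,
    ← Finset.sum_add_distrib]
  apply Finset.sum_congr rfl
  intro k _
  simp only [← Complex.normSq_eq_norm_sq, Complex.normSq_apply, Pi.sub_apply, Pi.smul_apply,
    smul_eq_mul, Complex.sub_re, Complex.sub_im, Complex.mul_re, Complex.mul_im,
    Complex.ofReal_re, Complex.ofReal_im, Complex.conj_re, Complex.conj_im]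
  ring

lemma limit_le (G U : ℝ) (hU : 0 ≤ U) (h : ∀ t : ℝ, 0 < t → t ≤ 1 → G ≤ t * U) : G ≤ 0 := by
  by_contra hG
  push Not at hG
  have h1 := h (G / (G + U + 1)) (by positivity) (by rw [div_le_one (by positivity)]; linarith)
  rw [div_mul_eq_mul_div, le_div_iff₀ (by positivity)] at h1
  nlinarith

lemma basic_ineq {n p : ℕ} (hn : 0 < n)
    (X : Matrix (Fin n) (Fin p) ℂ) (β0 : Fin p → ℂ) (ε : Fin n → ℂ) (lam : ℝ) (hlam : 0 ≤ lam)
    (b : Fin p → ℂ) (hb : IsLasso X (X.mulVec β0 + ε) lam b) :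
    1 / (n : ℝ) * l2sq (X.mulVec (b - β0)) - 1 / (n : ℝ) * rip ε (X.mulVec (b - β0))
      + lam * (l1 b - l1 β0) ≤ 0 := by
  have hn' : (0 : ℝ) < n := by exact_mod_cast hn
  set w := X.mulVec (b - β0) with hw
  apply limit_le _ (1 / (2 * n) * l2sq w) (mul_nonneg (by positivity) (l2sq_nonneg _))
  intro t ht0 ht1
  have h := hb (((1 - t : ℝ) : ℂ) • b + (t : ℂ) • β0)
  have e1 : X.mulVec b - (X.mulVec β0 + ε) = ((1 : ℝ) : ℂ) • w - ε := by
    rw [hw, Matrix.mulVec_sub]; simp; abel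
  have e2 : X.mulVec (((1 - t : ℝ) : ℂ) • b + (t : ℂ) • β0) - (X.mulVec β0 + ε)
      = ((1 - t : ℝ) : ℂ) • w - ε := by
    rw [hw, Matrix.mulVec_sub, Matrix.mulVec_add, Matrix.mulVec_smul, Matrix.mulVec_smul]
    funext i
    simp only [Pi.sub_apply, Pi.add_apply, Pi.smul_apply, smul_eq_mul]
    push_cast; ring
  have e3 : l1 (((1 - t : ℝ) : ℂ) • b + (t : ℂ) • β0) ≤ (1 - t) * l1 b + t * l1 β0 := by
    unfold l1
    rw [Finset.mul_sum, Finset.mul_sum, ← Finset.sum_add_distrib]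
    apply Finset.sum_le_sum
    intro i _
    refine (norm_add_le _ _).trans (le_of_eq ?_)
    simp only [Pi.smul_apply, smul_eq_mul, norm_mul, Complex.norm_real, Real.norm_eq_abs]
    rw [abs_of_nonneg ht0.le, abs_of_nonneg (by linarith : 0 ≤ 1 - t)]
  rw [e1, e2, l2sq_expand, l2sq_expand] at h
  have h' := mul_le_mul_of_nonneg_left e3 hlam
  have e4 : 1 / (n : ℝ) = 2 * (1 / (2 * n)) := by field_simp
  rw [e4]
  set q := 1 / (2 * (n : ℝ))
  have : t * (2 * q * l2sq w - 2 * q * rip ε w + lam * (l1 b - l1 β0)) ≤ t * (t * (q * l2sq w)) := by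
    nlinarith
  exact le_of_mul_le_mul_left this ht0

lemma noise_bound {n p : ℕ} (hn : 0 < n) (X : Matrix (Fin n) (Fin p) ℂ) (ε : Fin n → ℂ) (lam0 : ℝ)
    (hnoise : ∀ j : Fin p, 2 / (n : ℝ) * ‖∑ k, (starRingEnd ℂ) (ε k) * X k j‖ ≤ lam0)
    (v : Fin p → ℂ) : 1 / (n : ℝ) * rip ε (X.mulVec v) ≤ lam0 / 2 * l1 v := by
  have hn' : (0 : ℝ) < n := by exact_mod_cast hn
  have e : ∑ k, (starRingEnd ℂ) (ε k) * X.mulVec v k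
      = ∑ j, (∑ k, (starRingEnd ℂ) (ε k) * X k j) * v j := by
    simp only [Matrix.mulVec, dotProduct, Finset.mul_sum, Finset.sum_mul]
    rw [Finset.sum_comm]
    simp only [mul_assoc]
  have h1 : rip ε (X.mulVec v) ≤ ∑ j, ‖∑ k, (starRingEnd ℂ) (ε k) * X k j‖ * ‖v j‖ := by
    unfold rip
    rw [e]
    refine (Complex.re_le_norm _).trans ((norm_sum_le _ _).trans (le_of_eq ?_))
    simp only [norm_mul]
  calc _ ≤ 1 / (n : ℝ) * ∑ j, ‖∑ k, (starRingEnd ℂ) (ε k) * X k j‖ * ‖v j‖ := by gcongr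
    _ = ∑ j, (2 / (n : ℝ) * ‖∑ k, (starRingEnd ℂ) (ε k) * X k j‖) / 2 * ‖v j‖ := by
      rw [Finset.mul_sum]; apply Finset.sum_congr rfl; intro j _; ring
    _ ≤ ∑ j, lam0 / 2 * ‖v j‖ := by
      apply Finset.sum_le_sum; intro j _
      have := hnoise j
      gcongr
    _ = _ := by rw [l1, Finset.mul_sum]

lemma l1_diff {p : ℕ} (b β0 : Fin p → ℂ) (S : Finset (Fin p)) (hS : ∀ i ∉ S, β0 i = 0) :
    ∑ i ∈ Sᶜ, ‖(b - β0) i‖ - ∑ i ∈ S, ‖(b - β0) i‖ ≤ l1 b - l1 β0 := by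
  unfold l1
  rw [← Finset.sum_add_sum_compl S (fun i => ‖b i‖), ← Finset.sum_add_sum_compl S (fun i => ‖β0 i‖)]
  have h1 : ∑ i ∈ Sᶜ, ‖(b - β0) i‖ = ∑ i ∈ Sᶜ, ‖b i‖ := by
    apply Finset.sum_congr rfl; intro i hi
    simp [hS i (by simpa using hi)]
  have h2 : ∑ i ∈ Sᶜ, ‖β0 i‖ = 0 := by
    apply Finset.sum_eq_zero; intro i hi
    simp [hS i (by simpa using hi)]
  have h3 : ∑ i ∈ S, ‖β0 i‖ ≤ ∑ i ∈ S, ‖b i‖ + ∑ i ∈ S, ‖(b - β0) i‖ := by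
    rw [← Finset.sum_add_distrib]
    apply Finset.sum_le_sum; intro i _
    have := norm_sub_le (b i) (b i - β0 i)
    simpa using this
  linarith

/-- Let `β⁰ ∈ ℂᵖ` be `s₀`-sparse, `y = Xβ⁰ + ε`, and `δ ∈ (0,1)`. Suppose
`X/√n` satisfies the RIP of order `t := (36(1+δ)/(1-δ)+1)s₀` with constant `δₜ < δ`, and
`max_j (2/n)|⟨ε, Xⱼ⟩| ≤ λ₀` for some `λ₀ > 0`. Let `β̂` be the complex LASSO estimator with
regularization parameter `λ ≥ 2λ₀`. Then
`(1/n)‖X(β̂-β⁰)‖₂² + λ‖β̂-β⁰‖₁ ≤ 4λ²s₀/(1-δₜ)`; in particular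
`‖β̂-β⁰‖₁ ≤ 4λs₀/(1-δₜ)`. -/
theorem lasso_oracle_l1
    {n p : ℕ} (hn : 0 < n)
    (X : Matrix (Fin n) (Fin p) ℂ) (β0 : Fin p → ℂ) (ε y : Fin n → ℂ)
    (s0 : ℕ) (hs0 : sparseCount β0 ≤ s0)
    (hy : y = X.mulVec β0 + ε)
    (δ δt : ℝ) (hδ : δ ∈ Set.Ioo (0 : ℝ) 1) (hδt : δt < δ)
    (hRIP : RIP ((((Real.sqrt n : ℝ) : ℂ))⁻¹ • X)
      ((36 * (1 + δ) / (1 - δ) + 1) * s0) δt)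
    (lam0 : ℝ) (hlam0 : 0 < lam0)
    (hnoise : ∀ j : Fin p, 2 / (n : ℝ) * ‖∑ k, (starRingEnd ℂ) (ε k) * X k j‖ ≤ lam0)
    (lam : ℝ) (hlam : 2 * lam0 ≤ lam)
    (βhat : Fin p → ℂ) (hβhat : IsLasso X y lam βhat) :
    1 / (n : ℝ) * l2sq (X.mulVec (βhat - β0)) + lam * l1 (βhat - β0) ≤
        4 * lam ^ 2 * s0 / (1 - δt) ∧
      l1 (βhat - β0) ≤ 4 * lam * s0 / (1 - δt) := by
  have hn' : (0 : ℝ) < n := by exact_mod_cast hn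
  have hlp : 0 < lam := by linarith
  obtain ⟨hδ0, hδ1⟩ := hδ
  have hd1 : 0 < 1 - δt := by linarith
  suffices hmain : 1 / (n : ℝ) * l2sq (X.mulVec (βhat - β0)) + lam * l1 (βhat - β0) ≤
        4 * lam ^ 2 * s0 / (1 - δt) by
    refine ⟨hmain, ?_⟩
    have h0 : 0 ≤ 1 / (n : ℝ) * l2sq (X.mulVec (βhat - β0)) :=
      mul_nonneg (by positivity) (l2sq_nonneg _)
    have h1 : lam * l1 (βhat - β0) ≤ lam * (4 * lam * s0 / (1 - δt)) := by
      have : lam * (4 * lam * s0 / (1 - δt)) = 4 * lam ^ 2 * s0 / (1 - δt) := by ring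
      linarith
    exact le_of_mul_le_mul_left h1 hlp
  subst hy
  have hb := basic_ineq hn X β0 ε lam hlp.le βhat hβhat
  have hnz := noise_bound hn X ε lam0 hnoise (βhat - β0)
  set S := Finset.univ.filter fun i => β0 i ≠ 0 with hSdef
  have hScard : S.card ≤ s0 := hs0
  have hl := l1_diff βhat β0 S (fun i hi => by simpa [hSdef] using hi)
  set v := βhat - β0 with hv
  set a := ∑ i ∈ S, ‖v i‖ with ha
  set c := ∑ i ∈ Sᶜ, ‖v i‖ with hc
  have hac : l1 v = a + c := (Finset.sum_add_sum_compl S (fun i => ‖v i‖)).symm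
  have ha0 : 0 ≤ a := Finset.sum_nonneg fun _ _ => norm_nonneg _
  have hc0 : 0 ≤ c := Finset.sum_nonneg fun _ _ => norm_nonneg _
  rw [hac] at hnz ⊢
  set U := 1 / (n : ℝ) * l2sq (X.mulVec v) with hU
  have hU0 : 0 ≤ U := mul_nonneg (by positivity) (l2sq_nonneg _)
  have hkey : U + 3 / 4 * (lam * c) ≤ 5 / 4 * (lam * a) := by
    have h1 := mul_le_mul_of_nonneg_left hl hlp.le
    have h2 : lam0 / 2 * (a + c) ≤ lam / 4 * (a + c) := by
      apply mul_le_mul_of_nonneg_right _ (by linarith)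
      linarith
    linarith
  rcases Nat.eq_zero_or_pos s0 with hs | hs
  · have hSe : S = ∅ := by
      rw [← Finset.card_eq_zero]; omega
    have : a = 0 := by rw [ha, hSe]; simp
    rw [this] at hkey ⊢
    rw [hs]
    have : 0 ≤ lam * c := by positivity
    simp only [Nat.cast_zero, mul_zero, zero_div]
    linarith
  rcases Nat.eq_zero_or_pos p with hp | hp
  · subst hp
    have h1 : a = 0 := by simp [ha, Finset.eq_empty_of_isEmpty S]
    have h2 : c = 0 := by simp [hc, Finset.eq_empty_of_isEmpty Sᶜ]
    rw [h1, h2] at hkey ⊢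
    have : 0 ≤ 4 * lam ^ 2 * s0 / (1 - δt) := by positivity
    linarith
  have hs' : (1 : ℝ) ≤ s0 := by exact_mod_cast hs
  have hκ : 1 ≤ (1 + δ) / (1 - δ) := by rw [le_div_iff₀ (by linarith)]; linarith
  rw [mul_div_assoc] at hRIP
  set κ := (1 + δ) / (1 - δ) with hκdef
  have hκs : 1 ≤ κ * s0 := by nlinarith
  have hd0 : 0 ≤ δt := by
    have h := hRIP (Pi.single ⟨0, hp⟩ 1) (by
      have h1 : sparseCount (Pi.single (⟨0, hp⟩ : Fin p) (1 : ℂ)) ≤ 1 := by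
        unfold sparseCount
        rw [Finset.card_le_one]
        intro x hx z hz
        simp [Pi.single_apply] at hx hz
        rw [hx, hz]
      have h2 : (sparseCount (Pi.single (⟨0, hp⟩ : Fin p) (1 : ℂ)) : ℝ) ≤ 1 := by exact_mod_cast h1
      nlinarith)
    have h3 : l2sq (Pi.single (⟨0, hp⟩ : Fin p) (1 : ℂ)) = 1 := by
      unfold l2sq
      rw [Finset.sum_eq_single (⟨0, hp⟩ : Fin p)]
      · simp
      · intro b _ hb; simp [Pi.single_apply, hb]
      · simp
    rw [h3] at h
    linarith [h.1, h.2]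
  set A := ((((Real.sqrt n : ℝ) : ℂ))⁻¹ • X) with hAdef
  have hAU : nrm (A.mulVec v) ^ 2 = U := by
    rw [nrm_sq, hU, hAdef, Matrix.smul_mulVec]
    unfold l2sq
    rw [Finset.mul_sum]
    apply Finset.sum_congr rfl
    intro i _
    simp only [Pi.smul_apply, smul_eq_mul, norm_mul, norm_inv, Complex.norm_real, Real.norm_eq_abs]
    rw [mul_pow, inv_pow, sq_abs, Real.sq_sqrt hn'.le, one_div]
  have hM1 := Nat.floor_le (show (0 : ℝ) ≤ 36 * κ * s0 by positivity)
  have hM2 := Nat.lt_floor_add_one (36 * κ * s0)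
  set M := ⌊36 * κ * s0⌋₊ with hMdef
  have hM3 : 25 * (κ * s0) ≤ M := by linarith
  have hM0 : 0 < M := by
    have : (0 : ℝ) < M := by linarith
    exact_mod_cast this
  have hcone := cone_bound A M s0 hM0 δt hd0 (by linarith) (by
      have h1 : 1 + δt ≤ (1 - δt) * κ := by
        have : (1 - δ) * κ = 1 + δ := by rw [hκdef]; field_simp [(by linarith : (1 - δ) ≠ 0)]
        nlinarith
      have h2 : (1 + δt) * s0 ≤ (1 - δt) * κ * s0 := by gcongr
      have h3 := mul_le_mul_of_nonneg_left hM3 hd1.le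
      linarith) (fun β hβ => hRIP β (hβ.trans (by push_cast; linarith))) v S hScard
  set u := nrm (A.mulVec v)
  set r := √(s0 / (1 - δt)) with hr
  have hr2 : r ^ 2 = s0 / (1 - δt) := Real.sq_sqrt (by positivity)
  have hfin : 4 * lam ^ 2 * s0 / (1 - δt) = 4 * (lam * r) ^ 2 := by
    rw [mul_pow, hr2]; ring
  rw [hfin]
  have hcone' : lam * a ≤ u * (lam * r) + lam * c / 5 := by
    have := mul_le_mul_of_nonneg_left hcone hlp.le
    linarith
  rw [← hAU] at hkey ⊢
  nlinarith [sq_nonneg (u - 2 * (lam * r)), sq_nonneg u]
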